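/- arXiv:2001.09718 — 2 statements merged into one kernel-verified Lean document; each statement's English description precedes it below -/
import Mathlib

section
/- Let b ≥ 2 and n be natural numbers. The set {i ∈ ℕ : i is digit-wise dominated by n in base b} is finite, and its cardinality equals the product ∏_{d ∈ digits_b(n)} (d + 1), taken over the base-b digits d of n. -/
/-!
Deleting the last digit, `i ↦ (i / b, i % b)`, turns the numbers dominated by `n` into pairs made of
a number dominated by `n / b` and a digit that is at most `n % b`. Each digit `d` of `n` therefore
contributes a factor `d + 1`.
-/

/-- Digit-wise domination of `i` by `n` in base `b`: each base-`b` digit of `i` is at most the digit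
of `n` in the same position. Reading the digit in position `s` as `n / b ^ s % b` pads the shorter
of the two expansions with zeros. -/
def DigitwiseLE (b i n : ℕ) : Prop :=
  ∀ s : ℕ, (i / b ^ s) % b ≤ (n / b ^ s) % b

namespace DigitwiseLE

variable {b i n : ℕ}

theorem iff_div_and_mod :
    DigitwiseLE b i n ↔ DigitwiseLE b (i / b) (n / b) ∧ i % b ≤ n % b := by
  simp only [DigitwiseLE, Nat.div_div_eq_div_mul, ← pow_succ']
  rw [← Nat.and_forall_add_one, and_comm, pow_zero, Nat.div_one, Nat.div_one]

theorem le (hb : 1 < b) (h : DigitwiseLE b i n) : i ≤ n := by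
  induction i using Nat.strong_induction_on generalizing n with
  | _ i ih =>
    obtain rfl | hi := i.eq_zero_or_pos
    · exact n.zero_le
    obtain ⟨hdiv, hmod⟩ := iff_div_and_mod.mp h
    calc
      i = b * (i / b) + i % b := (Nat.div_add_mod i b).symm
      _ ≤ b * (n / b) + n % b :=
        add_le_add (Nat.mul_le_mul_left b (ih _ (Nat.div_lt_self hi hb) hdiv)) hmod
      _ = n := Nat.div_add_mod n b

theorem zero_right_iff (hb : 1 < b) : DigitwiseLE b i 0 ↔ i = 0 :=
  ⟨fun h => Nat.le_zero.mp (h.le hb), by rintro rfl _; rfl⟩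

theorem finite_setOf (hb : 1 < b) (n : ℕ) : {i | DigitwiseLE b i n}.Finite :=
  (Set.finite_Iic n).subset fun _ h => h.le hb

theorem card_subtype_eq_mul [NeZero b] (n : ℕ) :
    Nat.card {i // DigitwiseLE b i n} =
      Nat.card {i // DigitwiseLE b i (n / b)} * (n % b + 1) := by
  let divMod : {i // DigitwiseLE b i n} ≃
      {i // DigitwiseLE b i (n / b)} × {d : Fin b // d ≤ Fin.ofNat b n} :=
    ((Nat.divModEquiv b).subtypeEquiv fun _ => iff_div_and_mod).trans
      (Equiv.subtypeProdEquivProd (p := (DigitwiseLE b · (n / b))) (q := (· ≤ Fin.ofNat b n)))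
  have card_digits : Nat.card {d : Fin b // d ≤ Fin.ofNat b n} = n % b + 1 := by
    rw [Nat.card_eq_fintype_card, Fintype.card_subtype, Finset.filter_ge_eq_Iic,
      Fin.card_Iic, Fin.val_ofNat]
  rw [Nat.card_congr divMod, Nat.card_prod, card_digits]

theorem card_subtype (hb : 1 < b) (n : ℕ) :
    Nat.card {i // DigitwiseLE b i n} = ((Nat.digits b n).map (· + 1)).prod := by
  have : NeZero b := ⟨by lia⟩
  induction n using Nat.strong_induction_on with
  | _ n ih =>
    obtain rfl | hn := n.eq_zero_or_pos
    · simp [zero_right_iff hb]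
    · rw [card_subtype_eq_mul, ih _ (Nat.div_lt_self hn hb), Nat.digits_def' hb hn,
        List.map_cons, List.prod_cons, mul_comm]

end DigitwiseLE

theorem stmt_11 (b n : ℕ) (hb : 2 ≤ b) :
    {i : ℕ | ∀ s : ℕ, (i / b ^ s) % b ≤ (n / b ^ s) % b}.Finite ∧
      Nat.card {i : ℕ | ∀ s : ℕ, (i / b ^ s) % b ≤ (n / b ^ s) % b} =
        ((Nat.digits b n).map (· + 1)).prod :=
  ⟨DigitwiseLE.finite_setOf hb n, DigitwiseLE.card_subtype hb n⟩
end

section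
/- Let b ≥ 2 and n ≥ 1 be natural numbers. Then the number of i with 0 < i < n that are digit-wise dominated by n in base b is at least (Σ of the base-b digits of n) − 2. -/
/-!
Choosing a number digit-wise dominated by `n` amounts to choosing, independently for each digit `d`
of `n`, one of the values `0, …, d`. Hence there are exactly `∏ (d + 1)` such numbers, which is at
least `1 + ∑ d` on expanding the product. Discarding `0` and `n` costs at most two of them.
-/

theorem sum_add_one_le_prod_map_add_one {R : Type*} [Semiring R] [PartialOrder R]
    [CanonicallyOrderedAdd R] (l : List R) : l.sum + 1 ≤ (l.map (· + 1)).prod := by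
  induction l with
  | nil => simp
  | cons a l ih =>
    calc (a :: l).sum + 1 ≤ a + l.sum + 1 + a * l.sum := by simp
      _ = (a + 1) * (l.sum + 1) := by noncomm_ring
      _ ≤ (a + 1) * (l.map (· + 1)).prod := by gcongr
      _ = ((a :: l).map (· + 1)).prod := by simp

namespace DigitwiseLE

variable {b i n : ℕ}

theorem zero_left (b n : ℕ) : DigitwiseLE b 0 n := fun s => by simp

theorem iff_mod_le_and_div : DigitwiseLE b i n ↔ i % b ≤ n % b ∧ DigitwiseLE b (i / b) (n / b) := by
  simp only [DigitwiseLE, Nat.div_div_eq_div_mul, ← pow_succ']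
  rw [← Nat.and_forall_add_one, pow_zero, Nat.div_one, Nat.div_one]

theorem setOf_zero_right (hb : 1 < b) : {i | DigitwiseLE b i 0} = {0} := by
  ext i
  exact ⟨fun h => Nat.le_zero.mp (h.le hb), fun h => h ▸ zero_left b 0⟩

theorem image_div_mod_setOf (hb : 0 < b) (n : ℕ) :
    (fun i => (i / b, i % b)) '' {i | DigitwiseLE b i n} =
      {q | DigitwiseLE b q (n / b)} ×ˢ Set.Iic (n % b) := by
  ext ⟨q, r⟩
  constructor
  · rintro ⟨i, hi, hqr⟩
    obtain ⟨rfl, rfl⟩ := Prod.mk.inj hqr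
    exact (iff_mod_le_and_div.mp hi).symm
  · rintro ⟨hq, hr⟩
    have hrb : r < b := lt_of_le_of_lt hr (Nat.mod_lt n hb)
    have hdiv : (b * q + r) / b = q := by rw [Nat.mul_add_div hb, Nat.div_eq_of_lt hrb, add_zero]
    have hmod : (b * q + r) % b = r := by rw [Nat.mul_add_mod, Nat.mod_eq_of_lt hrb]
    refine ⟨b * q + r, iff_mod_le_and_div.mpr ?_, Prod.ext hdiv hmod⟩
    rw [hdiv, hmod]
    exact ⟨hr, hq⟩

theorem ncard_setOf_eq_mul (hb : 0 < b) (n : ℕ) :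
    {i | DigitwiseLE b i n}.ncard = (n % b + 1) * {q | DigitwiseLE b q (n / b)}.ncard := by
  have hinj : Function.Injective fun i : ℕ => (i / b, i % b) := fun i j hij => by
    obtain ⟨hdiv, hmod⟩ := Prod.mk.inj hij
    rw [← Nat.div_add_mod i b, hdiv, hmod, Nat.div_add_mod]
  rw [← Set.ncard_image_of_injective _ hinj, image_div_mod_setOf hb, Set.ncard_prod,
    Set.ncard_Iic_nat, mul_comm]

theorem ncard_setOf (hb : 1 < b) (n : ℕ) :
    {i | DigitwiseLE b i n}.ncard = ((Nat.digits b n).map (· + 1)).prod := by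
  induction n using Nat.strong_induction_on with
  | _ n ih =>
    rcases Nat.eq_zero_or_pos n with rfl | hn
    · simp [setOf_zero_right hb]
    · rw [ncard_setOf_eq_mul (zero_lt_one.trans hb), ih _ (Nat.div_lt_self hn hb),
        Nat.digits_def' hb hn, List.map_cons, List.prod_cons]

theorem setOf_sdiff_zero_self (hb : 1 < b) (n : ℕ) :
    {i | DigitwiseLE b i n} \ {0, n} = {i | 0 < i ∧ i < n ∧ DigitwiseLE b i n} := by
  ext i
  simp only [Set.mem_sdiff, Set.mem_ofPred_eq, Set.mem_insert_iff, Set.mem_singleton_iff]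
  constructor
  · rintro ⟨h, hne⟩
    have hle : i ≤ n := h.le hb
    exact ⟨by omega, by omega, h⟩
  · rintro ⟨hpos, hlt, h⟩
    exact ⟨h, by omega⟩

end DigitwiseLE

theorem stmt_12 (b n : ℕ) (hb : 2 ≤ b) (hn : 1 ≤ n) :
    (Nat.digits b n).sum - 2 ≤
      Nat.card {i : ℕ | 0 < i ∧ i < n ∧ ∀ s : ℕ, (i / b ^ s) % b ≤ (n / b ^ s) % b} := by
  calc (Nat.digits b n).sum - 2
      ≤ ((Nat.digits b n).map (· + 1)).prod - 2 := by
        gcongr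
        exact le_self_add.trans (sum_add_one_le_prod_map_add_one _)
    _ = {i | DigitwiseLE b i n}.ncard - 2 := by rw [DigitwiseLE.ncard_setOf hb]
    _ = {i | DigitwiseLE b i n}.ncard - ({0, n} : Set ℕ).ncard := by
        rw [Set.ncard_pair (Nat.ne_of_lt hn)]
    _ ≤ ({i | DigitwiseLE b i n} \ {0, n}).ncard := Set.le_ncard_sdiff _ _
    _ = Nat.card {i | 0 < i ∧ i < n ∧ DigitwiseLE b i n} := by
        rw [DigitwiseLE.setOf_sdiff_zero_self hb, Nat.card_coe_set_eq]
end
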